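/- arXiv:2404.02019 — 2 statements merged into one kernel-verified Lean document; each statement's English description precedes it below -/
import Mathlib

section
/- Let f : ℝ → ℝ be defined by f(t) = exp(1 − 1/(1 − t²)) for |t| < 1 and f(t) = 0 for |t| ≥ 1. Then the derivative of f attains its global minimum over ℝ at the point t₀ = 3^(−1/4); that is, for every t ∈ ℝ, deriv f t ≥ deriv f (3^(−1/4)). -/
/-- The standard bump-type function `f(t) = exp(1 - 1/(1 - t²))` for `|t| < 1`,
and `f(t) = 0` for `|t| ≥ 1`. -/
noncomputable def bumpFn : ℝ → ℝ :=
  fun t => if |t| < 1 then Real.exp (1 - 1 / (1 - t ^ 2)) else 0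

lemma bump_nonneg (t : ℝ) : 0 ≤ bumpFn t := by
  unfold bumpFn; split_ifs <;> positivity

lemma bump_deriv_out (t : ℝ) (h : ¬ |t| < 1) : deriv bumpFn t = 0 := by
  apply IsLocalMin.deriv_eq_zero
  refine Filter.Eventually.of_forall fun x => ?_
  have : bumpFn t = 0 := by simp [bumpFn, h]
  rw [this]; exact bump_nonneg x

lemma bump_deriv_in (t : ℝ) (h : |t| < 1) :
    deriv bumpFn t = -(2 * (t / (1 - t ^ 2) ^ 2 * Real.exp (1 - 1 / (1 - t ^ 2)))) := by
  have hp : (1 - t ^ 2) ≠ 0 := by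
    have := (sq_lt_one_iff_abs_lt_one t).2 h
    linarith
  have e : bumpFn =ᶠ[nhds t] fun t => Real.exp (1 - (1 - t ^ 2)⁻¹) := by
    have : ∀ᶠ x : ℝ in nhds t, |x| < 1 := continuous_abs.continuousAt.eventually_lt_const h
    filter_upwards [this] with x hx
    simp [bumpFn, hx]
  rw [e.deriv_eq]
  have h1 : HasDerivAt (fun x : ℝ => 1 - x ^ 2) (-(2 * t)) t := by
    simpa using (hasDerivAt_pow 2 t).const_sub 1
  have h2 := ((h1.fun_inv hp).const_sub 1).exp
  rw [h2.deriv, one_div]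
  field_simp

lemma key_u (a u : ℝ) (ha : 1 < a) (h : 2 * a ^ 2 - 6 * a + 3 = 0) (hu : 1 < u) :
    (u - 1) * u ^ 3 * Real.exp (2 * (1 - u)) ≤ (a - 1) * a ^ 3 * Real.exp (2 * (1 - a)) := by
  have ha1 : 0 < a - 1 := by linarith
  have ha0 : 0 < a := by linarith
  have h1 : u ≤ a * Real.exp (u / a - 1) := by
    have := Real.add_one_le_exp (u / a - 1)
    rw [← div_le_iff₀' ha0]; linarith
  have h2 : u - 1 ≤ (a - 1) * Real.exp ((u - 1) / (a - 1) - 1) := by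
    have := Real.add_one_le_exp ((u - 1) / (a - 1) - 1)
    rw [← div_le_iff₀' ha1]; linarith
  have h3 : (u - 1) * u ^ 3 ≤
      ((a - 1) * Real.exp ((u - 1) / (a - 1) - 1)) * (a * Real.exp (u / a - 1)) ^ 3 := by
    gcongr
  calc _ ≤ ((a - 1) * Real.exp ((u - 1) / (a - 1) - 1)) * (a * Real.exp (u / a - 1)) ^ 3
        * Real.exp (2 * (1 - u)) := by gcongr
    _ = (a - 1) * a ^ 3 * (Real.exp ((u - 1) / (a - 1) - 1) * Real.exp (u / a - 1) ^ 3
        * Real.exp (2 * (1 - u))) := by ring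
    _ = _ := by
      rw [← Real.exp_nat_mul, ← Real.exp_add, ← Real.exp_add]
      congr 2
      have := ha1.ne'
      field_simp
      push_cast
      linear_combination (a - u) * h

lemma sq_form (t : ℝ) (h1 : t ^ 2 < 1) :
    (t / (1 - t ^ 2) ^ 2 * Real.exp (1 - 1 / (1 - t ^ 2))) ^ 2 =
    (1 / (1 - t ^ 2) - 1) * (1 / (1 - t ^ 2)) ^ 3 * Real.exp (2 * (1 - 1 / (1 - t ^ 2))) := by
  have hp : (1 - t ^ 2) ≠ 0 := by linarith
  rw [mul_pow, ← Real.exp_nat_mul]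
  push_cast
  congr 1
  field_simp
  ring

theorem bumpFn_deriv_min (t : ℝ) :
    deriv bumpFn ((3 : ℝ) ^ (-(1 / 4 : ℝ))) ≤ deriv bumpFn t := by
  set s : ℝ := (3 : ℝ) ^ (-(1 / 4 : ℝ)) with hs
  have s0 : 0 < s := by positivity
  have s4 : s ^ 4 = 1 / 3 := by
    rw [hs, ← Real.rpow_natCast, ← Real.rpow_mul (by norm_num)]
    norm_num [Real.rpow_neg_one]
  have s2 : s ^ 2 < 1 := by nlinarith [sq_nonneg (s ^ 2)]
  have sa : |s| < 1 := (sq_lt_one_iff_abs_lt_one s).1 s2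
  have sp : 0 < 1 - s ^ 2 := by linarith
  rw [bump_deriv_in s sa]
  have hG : 0 ≤ s / (1 - s ^ 2) ^ 2 * Real.exp (1 - 1 / (1 - s ^ 2)) := by positivity
  by_cases h : |t| < 1
  · rw [bump_deriv_in t h]
    have t2 : t ^ 2 < 1 := (sq_lt_one_iff_abs_lt_one t).2 h
    have tp : 0 < 1 - t ^ 2 := by linarith
    suffices t / (1 - t ^ 2) ^ 2 * Real.exp (1 - 1 / (1 - t ^ 2)) ≤
      s / (1 - s ^ 2) ^ 2 * Real.exp (1 - 1 / (1 - s ^ 2)) by linarith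
    rcases le_or_gt t 0 with h0 | h0
    · refine le_trans ?_ hG
      exact mul_nonpos_of_nonpos_of_nonneg
        (div_nonpos_of_nonpos_of_nonneg h0 (by positivity)) (Real.exp_pos _).le
    · refine le_of_sq_le_sq ?_ hG
      rw [sq_form t t2, sq_form s s2]
      apply key_u
      · rw [lt_div_iff₀ sp]; nlinarith [pow_pos s0 2]
      · have := sp.ne'
        field_simp
        linear_combination 3 * s4
      · rw [lt_div_iff₀ tp]; nlinarith [pow_pos h0 2]
  · rw [bump_deriv_out t h]; linarith
end

section
/- Let f : ℝ → ℝ be defined by f(t) = exp(1 − 1/(1 − t²)) for |t| < 1 and f(t) = 0 for |t| ≥ 1. Then |deriv f t| ≤ 2.18 for every t ∈ ℝ. -/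
lemma bump_poly (u : ℝ) (hu : 1 ≤ u) :
    u ^ 3 * (u - 1) ≤ 1.1881 * (15.64 * ((8 * u - 3) / 16) ^ 4) := by
  nlinarith [sq_nonneg (u ^ 2 - 2.366 * u), sq_nonneg (u - 2.366),
    mul_nonneg (by linarith : (0:ℝ) ≤ u) (sq_nonneg (u - 2.366)), sq_nonneg (u ^ 2 - 5.6), sq_nonneg ((u-2.366)*(u-1))]

lemma bump_exp (u : ℝ) (hu : 1 ≤ u) :
    15.64 * ((8 * u - 3) / 16) ^ 4 ≤ Real.exp (2 * (u - 1)) := by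
  have h1 : (15.64:ℝ) ≤ Real.exp (11 / 4) := by
    have h : (15.64:ℝ) ^ 4 ≤ Real.exp (11 / 4) ^ 4 := by
      have e : Real.exp (11 / 4) ^ 4 = Real.exp 1 ^ 11 := by
        rw [← Real.exp_nat_mul, ← Real.exp_nat_mul]; norm_num
      rw [e]
      calc (15.64:ℝ) ^ 4 ≤ 2.7182818283 ^ 11 := by norm_num
        _ ≤ _ := by gcongr; exact Real.exp_one_gt_d9.le
    exact le_of_pow_le_pow_left₀ (by norm_num) (Real.exp_pos _).le h
  have h2 : ((8 * u - 3) / 16) ^ 4 ≤ Real.exp ((8 * u - 19) / 16) ^ 4 := by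
    have := Real.add_one_le_exp ((8 * u - 19) / 16)
    apply pow_le_pow_left₀ (by linarith)
    linarith
  have e : Real.exp (2 * (u - 1)) = Real.exp (11 / 4) * Real.exp ((8 * u - 19) / 16) ^ 4 := by
    rw [← Real.exp_nat_mul, ← Real.exp_add]; congr 1; push_cast; ring
  rw [e]
  have : 0 ≤ ((8 * u - 3) / 16) ^ 4 := by positivity
  exact mul_le_mul h1 h2 this (Real.exp_pos _).le

/-- The global gradient bound `|f'(t)| ≤ 2.18` for every `t`. -/
theorem bumpFn_deriv_bound (t : ℝ) : |deriv bumpFn t| ≤ 2.18 := by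
  by_cases ht : |t| < 1
  · have hp : 0 < 1 - t ^ 2 := by
      have := (sq_lt_one_iff_abs_lt_one t).2 ht
      linarith
    have hev : bumpFn =ᶠ[nhds t] fun t => Real.exp (1 - (1 - t ^ 2)⁻¹) := by
      have : ∀ᶠ s : ℝ in nhds t, |s| < 1 :=
        (continuous_abs.tendsto t).eventually (gt_mem_nhds ht)
      filter_upwards [this] with s hs
      simp [bumpFn, hs]
    have hd : HasDerivAt (fun t : ℝ => Real.exp (1 - (1 - t ^ 2)⁻¹))
        (Real.exp (1 - (1 - t ^ 2)⁻¹) * (-(2 * t) * ((1 - t ^ 2)⁻¹) ^ 2)) t := by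
      have h := ((((hasDerivAt_pow 2 t).const_sub 1).inv hp.ne').const_sub 1).exp
      have e : -(2 * t) * ((1 - t ^ 2)⁻¹) ^ 2
          = -(- -(((2:ℕ):ℝ) * t ^ (2 - 1)) / (1 - t ^ 2) ^ 2) := by
        push_cast
        field_simp
      rw [e]
      exact h
    rw [hev.deriv_eq, hd.deriv]
    set u := (1 - t ^ 2)⁻¹ with hu
    have hu1 : 1 ≤ u := (one_le_inv₀ hp).2 (by nlinarith [sq_nonneg t])
    have htu : u * t ^ 2 = u - 1 := by
      have : u * (1 - t ^ 2) = 1 := inv_mul_cancel₀ hp.ne'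
      linarith
    refine abs_le_of_sq_le_sq ?_ (by norm_num)
    have h := (bump_poly u hu1).trans
      (mul_le_mul_of_nonneg_left (bump_exp u hu1) (by norm_num))
    have hE : Real.exp (1 - u) ^ 2 * Real.exp (2 * (u - 1)) = 1 := by
      rw [← Real.exp_nat_mul, ← Real.exp_add, Real.exp_eq_one_iff]; push_cast; ring
    calc (Real.exp (1 - u) * (-(2 * t) * u ^ 2)) ^ 2
        = 4 * Real.exp (1 - u) ^ 2 * (u ^ 3 * (u * t ^ 2)) := by ring
      _ = 4 * Real.exp (1 - u) ^ 2 * (u ^ 3 * (u - 1)) := by rw [htu]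
      _ ≤ 4 * Real.exp (1 - u) ^ 2 * (1.1881 * Real.exp (2 * (u - 1))) := by gcongr
      _ = 4 * 1.1881 * (Real.exp (1 - u) ^ 2 * Real.exp (2 * (u - 1))) := by ring
      _ ≤ 2.18 ^ 2 := by rw [hE]; norm_num
  · have hm : IsLocalMin bumpFn t := by
      refine Filter.Eventually.of_forall fun s => ?_
      simp only [bumpFn, if_neg ht]
      split_ifs
      · exact (Real.exp_pos _).le
      · exact le_rfl
    rw [hm.deriv_eq_zero]
    norm_num
end
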